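/- arXiv:2111.06444 — 10 statements merged into one kernel-verified Lean document; each statement's English description precedes it below -/
import Mathlib

section
/- Let H1, H2, Np > 0, N ≥ 0, and set a = H1 + H2 + N. Let φ, ψ : [0,∞) → [0,∞) be continuous with φ strictly increasing and ψ nondecreasing. Suppose (ρ, R1, R2) with ρ ∈ (0,1] and R1, R2 ≥ 0 satisfies R1 ≤ (1/2)·log₂(1 + (1−ρ)H1/((1−ρ)N + Np)), R2 ≤ (1/2)·log₂(1 + (1−ρ)H2/((1−ρ)N + Np)), R1 + R2 < (1/2)·log₂(1 + (1−ρ)(H1+H2)/((1−ρ)N + Np)), and φ(R1 + R2) < ψ(ρ·a) (i.e., both the sum-rate constraint and the decoding-cost constraint are strict). Then there exists (ρ', R1', R2') with ρ' ∈ [0,1], R1' > R1, R2' > R2, satisfying all four constraints (with non-strict inequalities). In particular, such a point (R1, R2) does not lie on the maximum departure region boundary. -/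
theorem rate_strict (H Np N ρ ρ' : ℝ) (hH : 0 < H) (hNp : 0 < Np) (hN : 0 ≤ N)
    (hlt : ρ' < ρ) (hρ : ρ ≤ 1) :
    (1/2) * Real.logb 2 (1 + (1 - ρ) * H / ((1 - ρ) * N + Np)) <
    (1/2) * Real.logb 2 (1 + (1 - ρ') * H / ((1 - ρ') * N + Np)) := by
  have ht : 0 ≤ 1 - ρ := by linarith
  have hs : 0 ≤ 1 - ρ' := by linarith
  have d1 : 0 < (1 - ρ) * N + Np := by positivity
  have d2 : 0 < (1 - ρ') * N + Np := by positivity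
  have key : (1 - ρ) * H / ((1 - ρ) * N + Np) < (1 - ρ') * H / ((1 - ρ') * N + Np) := by
    rw [div_lt_div_iff₀ d1 d2]
    nlinarith [mul_pos (mul_pos hH hNp) (sub_pos.2 hlt)]
  have hp : 0 < 1 + (1 - ρ) * H / ((1 - ρ) * N + Np) := by positivity
  have := Real.logb_lt_logb (b := 2) (by norm_num) hp (add_lt_add_right key 1)
  linarith

/-- Classical PS-SWIPT MAC, simultaneous decoding: if both the sum-rate
constraint and the decoding-cost constraint are satisfied with strict
inequality at `(ρ, R1, R2)` with `ρ ∈ (0,1]`, then both rates can be strictly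
increased while keeping feasibility, so such a point does not lie on the
maximum departure region boundary. -/
theorem stmt_2 (H1 H2 Np N : ℝ) (hH1 : 0 < H1) (hH2 : 0 < H2) (hNp : 0 < Np) (hN : 0 ≤ N)
    (a : ℝ) (ha : a = H1 + H2 + N)
    (φ ψ : ℝ → ℝ)
    (hφc : ContinuousOn φ (Set.Ici 0)) (hψc : ContinuousOn ψ (Set.Ici 0))
    (hφmap : ∀ x : ℝ, 0 ≤ x → 0 ≤ φ x) (hψmap : ∀ x : ℝ, 0 ≤ x → 0 ≤ ψ x)
    (hφ : StrictMonoOn φ (Set.Ici 0)) (hψ : MonotoneOn ψ (Set.Ici 0))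
    (ρ R1 R2 : ℝ) (hρ : ρ ∈ Set.Ioc (0 : ℝ) 1) (hR1 : 0 ≤ R1) (hR2 : 0 ≤ R2)
    (h1 : R1 ≤ (1/2) * Real.logb 2 (1 + (1 - ρ) * H1 / ((1 - ρ) * N + Np)))
    (h2 : R2 ≤ (1/2) * Real.logb 2 (1 + (1 - ρ) * H2 / ((1 - ρ) * N + Np)))
    (hsum : R1 + R2 < (1/2) * Real.logb 2 (1 + (1 - ρ) * (H1 + H2) / ((1 - ρ) * N + Np)))
    (hcost : φ (R1 + R2) < ψ (ρ * a)) :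
    ∃ ρ' R1' R2' : ℝ, ρ' ∈ Set.Icc (0 : ℝ) 1 ∧ R1 < R1' ∧ R2 < R2' ∧
      R1' ≤ (1/2) * Real.logb 2 (1 + (1 - ρ') * H1 / ((1 - ρ') * N + Np)) ∧
      R2' ≤ (1/2) * Real.logb 2 (1 + (1 - ρ') * H2 / ((1 - ρ') * N + Np)) ∧
      R1' + R2' ≤ (1/2) * Real.logb 2 (1 + (1 - ρ') * (H1 + H2) / ((1 - ρ') * N + Np)) ∧
      φ (R1' + R2') ≤ ψ (ρ' * a) := by
  obtain ⟨hρ0, hρ1⟩ := hρ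
  have ha0 : 0 < a := by rw [ha]; positivity
  have hψat : ContinuousAt (fun r : ℝ => ψ (r * a)) ρ := by
    have h : ContinuousAt ψ (ρ * a) := hψc.continuousAt (Ici_mem_nhds (by positivity))
    exact ContinuousAt.comp (f := fun r : ℝ => r * a) h (by fun_prop)
  have e1 : ∀ᶠ r in nhdsWithin ρ (Set.Iio ρ), φ (R1 + R2) < ψ (r * a) :=
    (hψat.eventually (lt_mem_nhds hcost)).filter_mono nhdsWithin_le_nhds
  have e2 : ∀ᶠ r in nhdsWithin ρ (Set.Iio ρ), 0 < r :=
    (lt_mem_nhds hρ0).filter_mono nhdsWithin_le_nhds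
  obtain ⟨r, hr1, hr0, hrρ⟩ := (e1.and (e2.and self_mem_nhdsWithin)).exists
  have hrρ : r < ρ := hrρ
  have g1 := lt_of_le_of_lt h1 (rate_strict H1 Np N ρ r hH1 hNp hN hrρ hρ1)
  have g2 := lt_of_le_of_lt h2 (rate_strict H2 Np N ρ r hH2 hNp hN hrρ hρ1)
  have g3 := hsum.trans (rate_strict (H1 + H2) Np N ρ r (by positivity) hNp hN hrρ hρ1)
  have t : Filter.Tendsto (fun ε : ℝ => (R1 + ε) + (R2 + ε)) (nhdsWithin 0 (Set.Ioi 0))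
      (nhdsWithin (R1 + R2) (Set.Ici 0)) := by
    apply tendsto_nhdsWithin_iff.2
    refine ⟨?_, ?_⟩
    · have : ContinuousAt (fun ε : ℝ => (R1 + ε) + (R2 + ε)) 0 := by fun_prop
      have h := this.tendsto
      simp only [add_zero] at h
      exact h.mono_left nhdsWithin_le_nhds
    · filter_upwards [self_mem_nhdsWithin] with ε hε
      have hε : 0 < ε := hε
      show 0 ≤ (R1 + ε) + (R2 + ε)
      positivity
  have f4 := ((hφc (R1 + R2) (add_nonneg hR1 hR2)).tendsto.comp t).eventually (gt_mem_nhds hr1)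
  have f3 := (t.mono_right nhdsWithin_le_nhds).eventually (gt_mem_nhds g3)
  have f (R G : ℝ) (h : R < G) : ∀ᶠ ε in nhdsWithin (0:ℝ) (Set.Ioi 0), R + ε < G := by
    have : ∀ᶠ ε in nhdsWithin (0:ℝ) (Set.Ioi 0), ε < G - R :=
      (gt_mem_nhds (sub_pos.2 h)).filter_mono nhdsWithin_le_nhds
    filter_upwards [this] with ε hε
    linarith
  obtain ⟨ε, k1, k2, k3, k4, k5⟩ :=
    ((f _ _ g1).and ((f _ _ g2).and (f3.and (f4.and self_mem_nhdsWithin)))).exists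
  have k5 : 0 < ε := k5
  exact ⟨r, R1 + ε, R2 + ε, ⟨hr0.le, by linarith⟩, by linarith, by linarith,
    k1.le, k2.le, k3.le, le_of_lt k4⟩
end

section
/- Let H1, H2, Np > 0, N ≥ 0, and set a = H1 + H2 + N. Let φ, ψ : [0,∞) → [0,∞) be continuous and strictly increasing with φ(0) = 0 and ψ(0) = 0. Consider the feasible set F of triples (ρ, R1, R2) ∈ [0,1] × [0,∞) × [0,∞) satisfying R1 ≤ (1/2)·log₂(1 + (1−ρ)H1/((1−ρ)N + Np)), R2 ≤ (1/2)·log₂(1 + (1−ρ)H2/((1−ρ)N + Np)), R1 + R2 ≤ (1/2)·log₂(1 + (1−ρ)(H1+H2)/((1−ρ)N + Np)), and φ(R1 + R2) ≤ ψ(ρ·a). If (ρ*, R1*, R2*) ∈ F maximizes R1 + R2 over F, then both R1* + R2* = (1/2)·log₂(1 + (1−ρ*)(H1+H2)/((1−ρ*)N + Np)) and φ(R1* + R2*) = ψ(ρ*·a); that is, the whole harvested energy is consumed at the information-decoding block and the sum-rate constraint is tight. -/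
/-- Classical PS-SWIPT MAC, simultaneous decoding (Lemma 2): at a maximizer of
the sum rate over the feasible set, the sum-rate constraint and the
decoding-cost constraint are both tight: the whole harvested energy is
consumed at the information-decoding block. -/
theorem stmt_3 (H1 H2 Np N : ℝ) (hH1 : 0 < H1) (hH2 : 0 < H2) (hNp : 0 < Np) (hN : 0 ≤ N)
    (a : ℝ) (ha : a = H1 + H2 + N)
    (φ ψ : ℝ → ℝ)
    (hφc : ContinuousOn φ (Set.Ici 0)) (hψc : ContinuousOn ψ (Set.Ici 0))
    (hφmap : ∀ x : ℝ, 0 ≤ x → 0 ≤ φ x) (hψmap : ∀ x : ℝ, 0 ≤ x → 0 ≤ ψ x)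
    (hφ : StrictMonoOn φ (Set.Ici 0)) (hψ : StrictMonoOn ψ (Set.Ici 0))
    (hφ0 : φ 0 = 0) (hψ0 : ψ 0 = 0)
    (Feas : ℝ → ℝ → ℝ → Prop)
    (hFeas : ∀ ρ R1 R2 : ℝ, Feas ρ R1 R2 ↔
      ρ ∈ Set.Icc (0 : ℝ) 1 ∧ 0 ≤ R1 ∧ 0 ≤ R2 ∧
      R1 ≤ (1/2) * Real.logb 2 (1 + (1 - ρ) * H1 / ((1 - ρ) * N + Np)) ∧
      R2 ≤ (1/2) * Real.logb 2 (1 + (1 - ρ) * H2 / ((1 - ρ) * N + Np)) ∧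
      R1 + R2 ≤ (1/2) * Real.logb 2 (1 + (1 - ρ) * (H1 + H2) / ((1 - ρ) * N + Np)) ∧
      φ (R1 + R2) ≤ ψ (ρ * a))
    (ρs R1s R2s : ℝ) (hfeas : Feas ρs R1s R2s)
    (hmax : ∀ ρ R1 R2 : ℝ, Feas ρ R1 R2 → R1 + R2 ≤ R1s + R2s) :
    R1s + R2s = (1/2) * Real.logb 2 (1 + (1 - ρs) * (H1 + H2) / ((1 - ρs) * N + Np)) ∧
    φ (R1s + R2s) = ψ (ρs * a) := by
  have hapos : 0 < a := by rw [ha]; positivity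
  have hden : ∀ ρ : ℝ, ρ ≤ 1 → 0 < (1 - ρ) * N + Np := fun ρ h => by
    have : 0 ≤ (1 - ρ) * N := mul_nonneg (by linarith) hN
    linarith
  have hsnr : ∀ ρ c : ℝ, ρ ≤ 1 → 0 ≤ c → 0 ≤ (1 - ρ) * c / ((1 - ρ) * N + Np) :=
    fun ρ c h hc => div_nonneg (mul_nonneg (by linarith) hc) (hden ρ h).le
  have hg0 : ∀ ρ c : ℝ, ρ ≤ 1 → 0 ≤ c →
      0 ≤ (1/2) * Real.logb 2 (1 + (1 - ρ) * c / ((1 - ρ) * N + Np)) := fun ρ c h hc => by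
    have h1 := hsnr ρ c h hc
    have := Real.logb_nonneg (b := 2) (by norm_num)
      (show 1 ≤ 1 + (1 - ρ) * c / ((1 - ρ) * N + Np) by linarith)
    linarith
  set G : ℝ → ℝ := fun ρ =>
    (1/2) * Real.logb 2 (1 + (1 - ρ) * (H1 + H2) / ((1 - ρ) * N + Np)) with hG
  have hsub : ∀ ρ : ℝ, ρ ≤ 1 → G ρ ≤
      (1/2) * Real.logb 2 (1 + (1 - ρ) * H1 / ((1 - ρ) * N + Np)) +
      (1/2) * Real.logb 2 (1 + (1 - ρ) * H2 / ((1 - ρ) * N + Np)) := by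
    intro ρ h
    have h1 := hsnr ρ H1 h hH1.le
    have h2 := hsnr ρ H2 h hH2.le
    have e : (1 - ρ) * (H1 + H2) / ((1 - ρ) * N + Np) =
      (1 - ρ) * H1 / ((1 - ρ) * N + Np) + (1 - ρ) * H2 / ((1 - ρ) * N + Np) := by
      rw [mul_add, add_div]
    simp only [hG]
    rw [e, ← mul_add, ← Real.logb_mul (by positivity) (by positivity)]
    have := Real.logb_le_logb_of_le (b := 2) (by norm_num)
      (by positivity : 0 < 1 + ((1 - ρ) * H1 / ((1 - ρ) * N + Np) +
        (1 - ρ) * H2 / ((1 - ρ) * N + Np)))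
      (show _ ≤ (1 + (1 - ρ) * H1 / ((1 - ρ) * N + Np)) *
        (1 + (1 - ρ) * H2 / ((1 - ρ) * N + Np)) by nlinarith [mul_nonneg h1 h2])
    linarith
  have hanti : ∀ r t : ℝ, r < t → t ≤ 1 → G t < G r := by
    intro r t hrt ht
    have h1 := hsnr t (H1 + H2) ht (by positivity)
    have hlt : (1 - t) * (H1 + H2) / ((1 - t) * N + Np) <
        (1 - r) * (H1 + H2) / ((1 - r) * N + Np) := by
      rw [div_lt_div_iff₀ (hden t ht) (hden r (by linarith))]
      have : 0 < (t - r) * ((H1 + H2) * Np) := mul_pos (by linarith) (by positivity)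
      nlinarith
    have := Real.logb_lt_logb (b := 2) (by norm_num)
      (by positivity : 0 < 1 + (1 - t) * (H1 + H2) / ((1 - t) * N + Np))
      (add_lt_add_right hlt 1)
    simp only [hG]
    linarith
  have hcont : ∀ ρ : ℝ, ρ ≤ 1 → ContinuousAt G ρ := by
    intro ρ h
    have h1 := hsnr ρ (H1 + H2) h (by positivity)
    have h2 := (hden ρ h).ne'
    have h3 : (1 + (1 - ρ) * (H1 + H2) / ((1 - ρ) * N + Np)) ≠ 0 := by positivity
    have hc : ContinuousAt (fun ρ : ℝ => 1 + (1 - ρ) * (H1 + H2) / ((1 - ρ) * N + Np)) ρ := by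
      apply ContinuousAt.add continuousAt_const
      refine ContinuousAt.div (f := fun ρ : ℝ => (1 - ρ) * (H1 + H2))
        (g := fun ρ : ℝ => (1 - ρ) * N + Np) (by fun_prop) (by fun_prop) h2
    simp only [hG, Real.logb]
    exact ((hc.log h3).div_const _).const_mul _
  have key : ∀ ρ S : ℝ, 0 ≤ ρ → ρ ≤ 1 → 0 ≤ S → S ≤ G ρ → φ S ≤ ψ (ρ * a) →
      S ≤ R1s + R2s := by
    intro ρ S h0 h1 hS hSG hφS
    have hs := hsub ρ h1
    have g1 := hg0 ρ H1 h1 hH1.le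
    have g2 := hg0 ρ H2 h1 hH2.le
    rcases le_total S ((1/2) * Real.logb 2 (1 + (1 - ρ) * H1 / ((1 - ρ) * N + Np))) with h | h
    · have := hmax ρ S 0 ((hFeas _ _ _).2 ⟨⟨h0, h1⟩, hS, le_rfl, h, g2,
        by rw [add_zero]; exact hSG, by rw [add_zero]; exact hφS⟩)
      linarith
    · generalize hq : (1/2) * Real.logb 2 (1 + (1 - ρ) * H1 / ((1 - ρ) * N + Np)) = q at *
      have e : q + (S - q) = S := by ring
      have := hmax ρ q (S - q) ((hFeas _ _ _).2 ⟨⟨h0, h1⟩, g1, by linarith, hq.ge,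
        by linarith, by rw [e]; exact hSG, by rw [e]; exact hφS⟩)
      linarith
  obtain ⟨⟨hρ0, hρ1⟩, hR1, hR2, -, -, hsum, hdec⟩ := (hFeas _ _ _).1 hfeas
  change R1s + R2s ≤ G ρs at hsum
  change R1s + R2s = G ρs ∧ _
  have hS0 : 0 ≤ R1s + R2s := by linarith
  generalize R1s + R2s = S at *
  have strict : ∀ ρ : ℝ, 0 ≤ ρ → ρ ≤ 1 → S < G ρ → φ S < ψ (ρ * a) → False := by
    intro ρ h0 h1 hSG hlt
    have hc : ContinuousWithinAt φ (Set.Ioi S) S :=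
      (hφc S hS0).mono (fun x hx => le_trans hS0 (le_of_lt hx))
    have e1 := hc.eventually (gt_mem_nhds hlt)
    have e2 : ∀ᶠ x in nhdsWithin S (Set.Ioi S), x < G ρ :=
      nhdsWithin_le_nhds (gt_mem_nhds hSG)
    obtain ⟨x, ⟨hx1, hx2⟩, hx3⟩ := ((e1.and e2).and self_mem_nhdsWithin).exists
    have hx3 : S < x := hx3
    have := key ρ x h0 h1 (by linarith) hx2.le hx1.le
    linarith
  constructor
  · by_contra hne
    have hlt : S < G ρs := lt_of_le_of_ne hsum hne
    have hG1 : G 1 = 0 := by simp [hG]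
    have hρlt : ρs < 1 := by
      refine lt_of_le_of_ne hρ1 fun h => ?_
      rw [h, hG1] at hlt
      linarith
    have e1 : ∀ᶠ x in nhdsWithin ρs (Set.Ioi ρs), S < G x :=
      nhdsWithin_le_nhds ((hcont ρs hρ1).eventually (lt_mem_nhds hlt))
    have e2 : ∀ᶠ x in nhdsWithin ρs (Set.Ioi ρs), x < 1 :=
      nhdsWithin_le_nhds (gt_mem_nhds hρlt)
    obtain ⟨x, ⟨hx1, hx2⟩, hx3⟩ := ((e1.and e2).and self_mem_nhdsWithin).exists
    have hx3 : ρs < x := hx3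
    have hx0 : 0 ≤ x := by linarith
    refine strict x hx0 hx2.le hx1 (lt_of_le_of_lt hdec (hψ ?_ ?_ ?_))
    · exact mul_nonneg hρ0 hapos.le
    · exact mul_nonneg hx0 hapos.le
    · exact mul_lt_mul_of_pos_right hx3 hapos
  · by_contra hne
    have hlt : φ S < ψ (ρs * a) := lt_of_le_of_ne hdec hne
    have hρpos : 0 < ρs := by
      refine lt_of_le_of_ne hρ0 fun h => ?_
      rw [← h, zero_mul, hψ0] at hlt
      linarith [hφmap S hS0]
    have hψat : ContinuousAt ψ (ρs * a) := hψc.continuousAt (Ici_mem_nhds (mul_pos hρpos hapos))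
    have hc : ContinuousAt (fun x => ψ (x * a)) ρs :=
      ContinuousAt.comp (f := fun x : ℝ => x * a) hψat (by fun_prop)
    have e1 : ∀ᶠ x in nhdsWithin ρs (Set.Iio ρs), φ S < ψ (x * a) :=
      nhdsWithin_le_nhds (hc.eventually (lt_mem_nhds hlt))
    have e2 : ∀ᶠ x in nhdsWithin ρs (Set.Iio ρs), 0 < x :=
      nhdsWithin_le_nhds (lt_mem_nhds hρpos)
    obtain ⟨x, ⟨hx1, hx2⟩, hx3⟩ := ((e1.and e2).and self_mem_nhdsWithin).exists
    have hx3 : x < ρs := hx3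
    exact strict x hx2.le (by linarith) (lt_of_le_of_lt hsum (hanti x ρs hx3 hρ1)) hx1
end

section
/- Let a, N, Np be reals with a > N ≥ 0 and Np > 0. Let φ, ψ : [0,∞) → [0,∞) be continuous with φ strictly increasing, φ(0) = 0, ψ nondecreasing, ψ(0) = 0, and ψ(a) > 0. Then there exists a unique ρ̃ ∈ [0,1] satisfying φ( (1/2)·log₂(1 + (1−ρ̃)(a−N)/((1−ρ̃)N + Np)) ) = ψ(ρ̃·a); moreover 0 < ρ̃ < 1. -/
/-- Classical PS-SWIPT MAC, simultaneous decoding (Theorem 2,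
existence/uniqueness): there exists a unique `ρ̃ ∈ [0,1]` with
`φ((1/2)log₂(1 + (1−ρ̃)(a−N)/((1−ρ̃)N+Np))) = ψ(ρ̃·a)`, and moreover
`0 < ρ̃ < 1`. -/
theorem stmt_4 (a N Np : ℝ) (haN : N < a) (hN : 0 ≤ N) (hNp : 0 < Np)
    (φ ψ : ℝ → ℝ)
    (hφc : ContinuousOn φ (Set.Ici 0)) (hψc : ContinuousOn ψ (Set.Ici 0))
    (hφmap : ∀ x : ℝ, 0 ≤ x → 0 ≤ φ x) (hψmap : ∀ x : ℝ, 0 ≤ x → 0 ≤ ψ x)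
    (hφ : StrictMonoOn φ (Set.Ici 0)) (hψ : MonotoneOn ψ (Set.Ici 0))
    (hφ0 : φ 0 = 0) (hψ0 : ψ 0 = 0) (hψa : 0 < ψ a) :
    ∃ ρt : ℝ, ρt ∈ Set.Icc (0 : ℝ) 1 ∧
      φ ((1/2) * Real.logb 2 (1 + (1 - ρt) * (a - N) / ((1 - ρt) * N + Np))) = ψ (ρt * a) ∧
      0 < ρt ∧ ρt < 1 ∧
      ∀ ρ ∈ Set.Icc (0 : ℝ) 1,
        φ ((1/2) * Real.logb 2 (1 + (1 - ρ) * (a - N) / ((1 - ρ) * N + Np))) = ψ (ρ * a) →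
        ρ = ρt := by
  have ha : 0 < a := lt_of_le_of_lt hN haN
  have hd : ∀ r ∈ Set.Icc (0 : ℝ) 1, 0 < (1 - r) * N + Np := by
    intro r hr
    have := mul_nonneg (sub_nonneg.2 hr.2) hN
    linarith
  have hq : ∀ r ∈ Set.Icc (0 : ℝ) 1, 0 ≤ (1 - r) * (a - N) / ((1 - r) * N + Np) := by
    intro r hr
    exact div_nonneg (mul_nonneg (sub_nonneg.2 hr.2) (by linarith)) (hd r hr).le
  set g : ℝ → ℝ := fun r =>
    (1/2) * Real.logb 2 (1 + (1 - r) * (a - N) / ((1 - r) * N + Np)) with hg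
  have hg0 : ∀ r ∈ Set.Icc (0 : ℝ) 1, g r ∈ Set.Ici (0 : ℝ) := by
    intro r hr
    have h1 : 0 ≤ Real.logb 2 (1 + (1 - r) * (a - N) / ((1 - r) * N + Np)) :=
      Real.logb_nonneg (by norm_num) (by linarith [hq r hr])
    simp only [hg, Set.mem_Ici]
    linarith
  have hganti : StrictAntiOn g (Set.Icc (0 : ℝ) 1) := by
    intro r hr s hs hrs
    have h1 : (1 - s) * (a - N) / ((1 - s) * N + Np) < (1 - r) * (a - N) / ((1 - r) * N + Np) := by
      rw [div_lt_div_iff₀ (hd s hs) (hd r hr)]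
      have := mul_pos (mul_pos (sub_pos.2 hrs) (sub_pos.2 haN)) hNp
      nlinarith
    have h2 := Real.logb_lt_logb (b := 2) (by norm_num)
      (by linarith [hq s hs] : 0 < 1 + (1 - s) * (a - N) / ((1 - s) * N + Np))
      (by linarith : _ < 1 + (1 - r) * (a - N) / ((1 - r) * N + Np))
    simp only [hg]
    linarith
  have hgc : ContinuousOn g (Set.Icc (0 : ℝ) 1) := by
    have h1 : ContinuousOn (fun r : ℝ => 1 + (1 - r) * (a - N) / ((1 - r) * N + Np))
        (Set.Icc (0 : ℝ) 1) :=
      continuousOn_const.add (ContinuousOn.div (by fun_prop) (by fun_prop)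
        (fun r hr => (hd r hr).ne'))
    have h2 := h1.log (fun r hr => ne_of_gt (by linarith [hq r hr]))
    exact continuousOn_const.mul (h2.div_const _)
  have hma : ∀ r ∈ Set.Icc (0 : ℝ) 1, r * a ∈ Set.Ici (0 : ℝ) :=
    fun r hr => mul_nonneg hr.1 ha.le
  have hFc : ContinuousOn (fun r => φ (g r) - ψ (r * a)) (Set.Icc (0 : ℝ) 1) :=
    (hφc.comp hgc hg0).sub (hψc.comp (by fun_prop) hma)
  have hFa : StrictAntiOn (fun r => φ (g r) - ψ (r * a)) (Set.Icc (0 : ℝ) 1) := by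
    intro r hr s hs hrs
    have h1 := hφ (hg0 s hs) (hg0 r hr) (hganti hr hs hrs)
    have h2 := hψ (hma r hr) (hma s hs) (mul_le_mul_of_nonneg_right hrs.le ha.le)
    simp only
    linarith
  have h0m : (0 : ℝ) ∈ Set.Icc (0 : ℝ) 1 := by simp
  have h1m : (1 : ℝ) ∈ Set.Icc (0 : ℝ) 1 := by simp
  have hg1 : g 1 = 0 := by simp [hg]
  have hF1 : φ (g 1) - ψ (1 * a) < 0 := by
    rw [hg1, hφ0, one_mul]; linarith
  have hF0 : 0 < φ (g 0) - ψ (0 * a) := by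
    have h1 := hφ (hg0 1 h1m) (hg0 0 h0m) (hganti h0m h1m one_pos)
    rw [hg1, hφ0] at h1
    rw [zero_mul, hψ0]; linarith
  obtain ⟨t, ht, hFt⟩ := intermediate_value_Icc' (zero_le_one' ℝ) hFc ⟨hF1.le, hF0.le⟩
  simp only at hFt
  refine ⟨t, ht, sub_eq_zero.1 hFt, ?_, ?_, ?_⟩
  · refine lt_of_le_of_ne ht.1 ?_
    rintro rfl
    linarith
  · refine lt_of_le_of_ne ht.2 ?_
    rintro rfl
    linarith
  · intro r hr h
    refine hFa.injOn hr ht ?_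
    change φ (g r) - ψ (r * a) = φ (g t) - ψ (t * a)
    rw [hFt]
    exact sub_eq_zero.2 h
end

section
/- Let H1, H2, Np > 0, N ≥ 0, and set a = H1 + H2 + N. Let φ, ψ : [0,∞) → [0,∞) be continuous and strictly increasing with φ(0) = 0, ψ(0) = 0, and ψ(a) > 0. Let F be the set of triples (ρ, R1, R2) ∈ [0,1] × [0,∞) × [0,∞) satisfying R1 ≤ (1/2)·log₂(1 + (1−ρ)H1/((1−ρ)N + Np)), R2 ≤ (1/2)·log₂(1 + (1−ρ)H2/((1−ρ)N + Np)), R1 + R2 ≤ (1/2)·log₂(1 + (1−ρ)(H1+H2)/((1−ρ)N + Np)), and φ(R1 + R2) ≤ ψ(ρ·a), and let ρ̃ ∈ (0,1) be the unique solution of φ( (1/2)·log₂(1 + (1−ρ)(a−N)/((1−ρ)N + Np)) ) = ψ(ρ·a). Then the supremum of R1 + R2 over F is attained and equals (1/2)·log₂(1 + (1−ρ̃)(a−N)/((1−ρ̃)N + Np)). -/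
/-- Classical PS-SWIPT MAC, simultaneous decoding (Theorem 2, optimal sum
rate): if `ρ̃ ∈ (0,1)` is the unique solution of
`φ((1/2)log₂(1 + (1−ρ)(a−N)/((1−ρ)N+Np))) = ψ(ρ·a)`, then the supremum of
`R1 + R2` over the feasible set is attained and equals
`(1/2)log₂(1 + (1−ρ̃)(a−N)/((1−ρ̃)N+Np))`. -/
theorem stmt_5 (H1 H2 Np N : ℝ) (hH1 : 0 < H1) (hH2 : 0 < H2) (hNp : 0 < Np) (hN : 0 ≤ N)
    (a : ℝ) (ha : a = H1 + H2 + N)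
    (φ ψ : ℝ → ℝ)
    (hφc : ContinuousOn φ (Set.Ici 0)) (hψc : ContinuousOn ψ (Set.Ici 0))
    (hφmap : ∀ x : ℝ, 0 ≤ x → 0 ≤ φ x) (hψmap : ∀ x : ℝ, 0 ≤ x → 0 ≤ ψ x)
    (hφ : StrictMonoOn φ (Set.Ici 0)) (hψ : StrictMonoOn ψ (Set.Ici 0))
    (hφ0 : φ 0 = 0) (hψ0 : ψ 0 = 0) (hψa : 0 < ψ a)
    (F : Set (ℝ × ℝ × ℝ))
    (hF : ∀ ρ R1 R2 : ℝ, (ρ, R1, R2) ∈ F ↔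
      ρ ∈ Set.Icc (0 : ℝ) 1 ∧ 0 ≤ R1 ∧ 0 ≤ R2 ∧
      R1 ≤ (1/2) * Real.logb 2 (1 + (1 - ρ) * H1 / ((1 - ρ) * N + Np)) ∧
      R2 ≤ (1/2) * Real.logb 2 (1 + (1 - ρ) * H2 / ((1 - ρ) * N + Np)) ∧
      R1 + R2 ≤ (1/2) * Real.logb 2 (1 + (1 - ρ) * (H1 + H2) / ((1 - ρ) * N + Np)) ∧
      φ (R1 + R2) ≤ ψ (ρ * a))
    (ρt : ℝ) (hρt : ρt ∈ Set.Ioo (0 : ℝ) 1)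
    (heq : φ ((1/2) * Real.logb 2 (1 + (1 - ρt) * (a - N) / ((1 - ρt) * N + Np))) = ψ (ρt * a))
    (huniq : ∀ ρ ∈ Set.Icc (0 : ℝ) 1,
      φ ((1/2) * Real.logb 2 (1 + (1 - ρ) * (a - N) / ((1 - ρ) * N + Np))) = ψ (ρ * a) →
      ρ = ρt) :
    IsGreatest {s : ℝ | ∃ ρ R1 R2 : ℝ, (ρ, R1, R2) ∈ F ∧ s = R1 + R2}
      ((1/2) * Real.logb 2 (1 + (1 - ρt) * (a - N) / ((1 - ρt) * N + Np))) := by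
  have haN : a - N = H1 + H2 := by rw [ha]; ring
  rw [haN] at heq ⊢
  obtain ⟨h0, h1⟩ := hρt
  have h1' : 0 < 1 - ρt := by linarith
  have ha0 : 0 < a := by rw [ha]; linarith
  have hden : 0 < (1 - ρt) * N + Np := by positivity
  have hx : 0 < (1 - ρt) * H1 / ((1 - ρt) * N + Np) := by positivity
  have hy : 0 < (1 - ρt) * H2 / ((1 - ρt) * N + Np) := by positivity
  have hxy : (1 - ρt) * (H1 + H2) / ((1 - ρt) * N + Np)
      = (1 - ρt) * H1 / ((1 - ρt) * N + Np) + (1 - ρt) * H2 / ((1 - ρt) * N + Np) := by ring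
  have hC0 : 0 ≤ (1/2) * Real.logb 2 (1 + (1 - ρt) * (H1 + H2) / ((1 - ρt) * N + Np)) := by
    have := Real.logb_nonneg (b := 2) (by norm_num)
      (show 1 ≤ 1 + (1 - ρt) * (H1 + H2) / ((1 - ρt) * N + Np) by rw [hxy]; linarith)
    linarith
  constructor
  · refine ⟨ρt, (1/2) * Real.logb 2 (1 + (1 - ρt) * H1 / ((1 - ρt) * N + Np)),
      (1/2) * Real.logb 2 (1 + (1 - ρt) * (H1 + H2) / ((1 - ρt) * N + Np))
       - (1/2) * Real.logb 2 (1 + (1 - ρt) * H1 / ((1 - ρt) * N + Np)), ?_, by ring⟩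
    rw [hF, add_sub_cancel]
    refine ⟨⟨h0.le, h1.le⟩, ?_, ?_, le_rfl, ?_, le_rfl, heq.le⟩
    · have := Real.logb_nonneg (b := 2) (by norm_num)
        (show 1 ≤ 1 + (1 - ρt) * H1 / ((1 - ρt) * N + Np) by linarith)
      linarith
    · have := Real.logb_le_logb_of_le (b := 2) (by norm_num)
        (show 0 < 1 + (1 - ρt) * H1 / ((1 - ρt) * N + Np) by linarith)
        (show _ ≤ 1 + (1 - ρt) * (H1 + H2) / ((1 - ρt) * N + Np) by rw [hxy]; linarith)
      linarith
    · rw [hxy]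
      generalize (1 - ρt) * H1 / ((1 - ρt) * N + Np) = x at *
      generalize (1 - ρt) * H2 / ((1 - ρt) * N + Np) = y at *
      have := Real.logb_le_logb_of_le (b := 2) (by norm_num)
        (show 0 < 1 + (x + y) by linarith)
        (show 1 + (x + y) ≤ (1 + x) * (1 + y) by nlinarith [mul_pos hx hy])
      rw [Real.logb_mul (by linarith) (by linarith)] at this
      linarith
  · rintro s ⟨ρ, R1, R2, hmem, rfl⟩
    rw [hF] at hmem
    obtain ⟨⟨hρ0, hρ1⟩, hR1, hR2, -, -, hsum, hcost⟩ := hmem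
    rcases le_total ρt ρ with h | h
    · refine hsum.trans ?_
      have hρ1' : 0 ≤ 1 - ρ := by linarith
      have hden' : 0 < (1 - ρ) * N + Np := by positivity
      have hle : (1 - ρ) * (H1 + H2) / ((1 - ρ) * N + Np)
          ≤ (1 - ρt) * (H1 + H2) / ((1 - ρt) * N + Np) := by
        rw [div_le_div_iff₀ hden' hden]
        have : 0 ≤ (ρ - ρt) * ((H1 + H2) * Np) :=
          mul_nonneg (by linarith) (by positivity)
        nlinarith
      have hpos : 0 ≤ (1 - ρ) * (H1 + H2) / ((1 - ρ) * N + Np) := by positivity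
      have := Real.logb_le_logb_of_le (b := 2) (by norm_num)
        (show 0 < 1 + (1 - ρ) * (H1 + H2) / ((1 - ρ) * N + Np) by linarith)
        (add_le_add_right hle 1)
      linarith
    · have h2 : ψ (ρ * a) ≤ ψ (ρt * a) :=
        hψ.monotoneOn (Set.mem_Ici.2 (by positivity)) (Set.mem_Ici.2 (by positivity))
          (mul_le_mul_of_nonneg_right h ha0.le)
      exact (hφ.le_iff_le (Set.mem_Ici.2 (by positivity)) (Set.mem_Ici.2 hC0)).1
        ((hcost.trans h2).trans heq.ge)
end

section
/- Let H1, H2, Np > 0, N ≥ 0, and set Nu = H2 + N and a = H1 + H2 + N. Let φ, ψ : [0,∞) → [0,∞) be continuous with φ strictly increasing and ψ nondecreasing. Suppose (ρ, R1, R2) with ρ ∈ (0,1] and R1, R2 ≥ 0 satisfies R1 ≤ (1/2)·log₂(1 + (1−ρ)H1/((1−ρ)Nu + Np)), R2 ≤ (1/2)·log₂(1 + (1−ρ)H2/((1−ρ)N + Np)), and φ(R1) + φ(R2) < ψ(ρ·a) (i.e., the decoding-cost constraint is strict). Then there exists (ρ', R1', R2') with ρ' ∈ [0,1], R1' > R1,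 R2' > R2, satisfying all three constraints (with non-strict inequalities). In particular, such a rate pair does not lie on the maximum departure region boundary of the SIC scheme. -/
open Filter Topology in
theorem rate_strict_anti (H M Np : ℝ) (hH : 0 < H) (hM : 0 ≤ M) (hNp : 0 < Np) (ρ r : ℝ)
    (hr : r < ρ) (hρ : ρ ≤ 1) :
    (1/2) * Real.logb 2 (1 + (1 - ρ) * H / ((1 - ρ) * M + Np)) <
      (1/2) * Real.logb 2 (1 + (1 - r) * H / ((1 - r) * M + Np)) := by
  have e1 : 0 ≤ 1 - ρ := by linarith
  have e2 : 0 < 1 - r := by linarith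
  have d1 : 0 < (1 - ρ) * M + Np := by positivity
  have d2 : 0 < (1 - r) * M + Np := by positivity
  have key : (1 - ρ) * H / ((1 - ρ) * M + Np) < (1 - r) * H / ((1 - r) * M + Np) := by
    rw [div_lt_div_iff₀ d1 d2]
    nlinarith [mul_pos (mul_pos hH hNp) (sub_pos.2 hr)]
  have p : 0 < 1 + (1 - ρ) * H / ((1 - ρ) * M + Np) := by positivity
  have := Real.logb_lt_logb (b := 2) (by norm_num) p (by linarith : _ < 1 + (1 - r) * H / ((1 - r) * M + Np))
  linarith

open Filter Topology in
theorem shift_tendsto (φ : ℝ → ℝ) (hφc : ContinuousOn φ (Set.Ici 0)) (R : ℝ) (hR : 0 ≤ R) :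
    Tendsto (fun t => φ (R + t)) (𝓝[>] 0) (𝓝 (φ R)) := by
  refine (hφc R hR).tendsto.comp (tendsto_nhdsWithin_iff.2 ⟨?_, ?_⟩)
  · have : Tendsto (fun t : ℝ => R + t) (𝓝 0) (𝓝 (R + 0)) := (continuous_const.add continuous_id).tendsto 0
    rw [add_zero] at this
    exact this.mono_left nhdsWithin_le_nhds
  · filter_upwards [self_mem_nhdsWithin] with t ht
    have : 0 < t := ht
    exact add_nonneg hR this.le

open Filter Topology in
/-- Classical PS-SWIPT MAC with SIC decoding: if the decoding-cost constraint
`φ(R1) + φ(R2) < ψ(ρ·a)` is strict at `(ρ, R1, R2)` with `ρ ∈ (0,1]`, then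
both rates can be strictly increased while keeping all three constraints, so
such a rate pair does not lie on the maximum departure region boundary of the
SIC scheme. -/
theorem stmt_7 (H1 H2 Np N : ℝ) (hH1 : 0 < H1) (hH2 : 0 < H2) (hNp : 0 < Np) (hN : 0 ≤ N)
    (Nu a : ℝ) (hNu : Nu = H2 + N) (ha : a = H1 + H2 + N)
    (φ ψ : ℝ → ℝ)
    (hφc : ContinuousOn φ (Set.Ici 0)) (hψc : ContinuousOn ψ (Set.Ici 0))
    (hφmap : ∀ x : ℝ, 0 ≤ x → 0 ≤ φ x) (hψmap : ∀ x : ℝ, 0 ≤ x → 0 ≤ ψ x)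
    (hφ : StrictMonoOn φ (Set.Ici 0)) (hψ : MonotoneOn ψ (Set.Ici 0))
    (ρ R1 R2 : ℝ) (hρ : ρ ∈ Set.Ioc (0 : ℝ) 1) (hR1 : 0 ≤ R1) (hR2 : 0 ≤ R2)
    (h1 : R1 ≤ (1/2) * Real.logb 2 (1 + (1 - ρ) * H1 / ((1 - ρ) * Nu + Np)))
    (h2 : R2 ≤ (1/2) * Real.logb 2 (1 + (1 - ρ) * H2 / ((1 - ρ) * N + Np)))
    (hcost : φ R1 + φ R2 < ψ (ρ * a)) :
    ∃ ρ' R1' R2' : ℝ, ρ' ∈ Set.Icc (0 : ℝ) 1 ∧ R1 < R1' ∧ R2 < R2' ∧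
      R1' ≤ (1/2) * Real.logb 2 (1 + (1 - ρ') * H1 / ((1 - ρ') * Nu + Np)) ∧
      R2' ≤ (1/2) * Real.logb 2 (1 + (1 - ρ') * H2 / ((1 - ρ') * N + Np)) ∧
      φ R1' + φ R2' ≤ ψ (ρ' * a) := by
  obtain ⟨hρ0, hρ1⟩ := hρ
  have hapos : 0 < a := by rw [ha]; positivity
  have hNu0 : 0 ≤ Nu := by rw [hNu]; positivity
  obtain ⟨c, hc1, hc2⟩ := exists_between hcost
  have hψa : ContinuousAt ψ (ρ * a) := hψc.continuousAt (Ici_mem_nhds (mul_pos hρ0 hapos))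
  have hcomp : ContinuousAt (fun r : ℝ => ψ (r * a)) ρ :=
    ContinuousAt.comp (f := fun r : ℝ => r * a) (g := ψ) hψa (by fun_prop)
  have ev1 : ∀ᶠ r in 𝓝[<] ρ, c < ψ (r * a) :=
    (hcomp.eventually (lt_mem_nhds hc2)).filter_mono nhdsWithin_le_nhds
  have ev2 : ∀ᶠ r in 𝓝[<] ρ, r ∈ Set.Ioo 0 ρ := Ioo_mem_nhdsLT hρ0
  obtain ⟨r, hr1, hr0, hrρ⟩ := (ev1.and ev2).exists
  have k1 := h1.trans_lt (rate_strict_anti H1 Nu Np hH1 hNu0 hNp ρ r hrρ hρ1)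
  have k2 := h2.trans_lt (rate_strict_anti H2 N Np hH2 hN hNp ρ r hrρ hρ1)
  have ev3 := ((shift_tendsto φ hφc R1 hR1).add (shift_tendsto φ hφc R2 hR2)).eventually
    (gt_mem_nhds hc1)
  have ev4 := Ioo_mem_nhdsGT (lt_min (sub_pos.2 k1) (sub_pos.2 k2))
  obtain ⟨t, ht, ht0, htm⟩ := (ev3.and ev4).exists
  have m1 := htm.trans_le (min_le_left _ _)
  have m2 := htm.trans_le (min_le_right _ _)
  exact ⟨r, R1 + t, R2 + t, ⟨hr0.le, by linarith⟩, by linarith, by linarith, by linarith,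
    by linarith, by linarith⟩
end

section
/- Let H1, H2, Np > 0, N ≥ 0, and set Nu = H2 + N and a = H1 + H2 + N. Let φ, ψ : [0,∞) → [0,∞) be continuous and strictly increasing with φ(0) = 0 and ψ(0) = 0. Consider the feasible set F of triples (ρ, R1, R2) ∈ [0,1] × [0,∞) × [0,∞) satisfying R1 ≤ (1/2)·log₂(1 + (1−ρ)H1/((1−ρ)Nu + Np)), R2 ≤ (1/2)·log₂(1 + (1−ρ)H2/((1−ρ)N + Np)), and φ(R1) + φ(R2) ≤ ψ(ρ·a). If (ρ*, R1*, R2*) ∈ F maximizes R1 + R2 over F, then φ(R1*) + φ(R2*) = ψ(ρ*·a) (the harvested energy is fully consumed), and at least one of the two individual rate constraints holds with equality. -/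
open Set Filter Topology

lemma cap_anti (H M K : ℝ) (hH : 0 < H) (hM : 0 ≤ M) (hK : 0 < K) (x y : ℝ) (hxy : x < y)
    (hy : y ≤ 1) :
    (1/2) * Real.logb 2 (1 + (1 - y) * H / ((1 - y) * M + K)) <
      (1/2) * Real.logb 2 (1 + (1 - x) * H / ((1 - x) * M + K)) := by
  have h1 : 0 ≤ 1 - y := by linarith
  have h2 : 0 ≤ 1 - x := by linarith
  have d1 : 0 < (1 - y) * M + K := by positivity
  have d2 : 0 < (1 - x) * M + K := by positivity
  have hp : 0 < 1 + (1 - y) * H / ((1 - y) * M + K) := by positivity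
  have : (1 - y) * H / ((1 - y) * M + K) < (1 - x) * H / ((1 - x) * M + K) := by
    rw [div_lt_div_iff₀ d1 d2]
    nlinarith [mul_pos (mul_pos hH hK) (sub_pos.2 hxy)]
  have := Real.logb_lt_logb (b := 2) (by norm_num) hp (add_lt_add_right this 1)
  linarith

lemma cap_cont (H M K : ℝ) (hH : 0 < H) (hM : 0 ≤ M) (hK : 0 < K) (x : ℝ) (hx : x ≤ 1) :
    ContinuousAt (fun x : ℝ => (1/2) * Real.logb 2 (1 + (1 - x) * H / ((1 - x) * M + K))) x := by
  have h2 : 0 ≤ 1 - x := by linarith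
  have d2 : 0 < (1 - x) * M + K := by positivity
  have hp : 0 < 1 + (1 - x) * H / ((1 - x) * M + K) := by positivity
  unfold Real.logb
  refine continuousAt_const.mul (ContinuousAt.div_const (ContinuousAt.log ?_ (by exact hp.ne')) _)
  refine continuousAt_const.add (ContinuousAt.div ?_ ?_ d2.ne') <;> fun_prop

/-- Classical PS-SWIPT MAC with SIC decoding (Lemma 3): at a maximizer of the
sum rate over the SIC feasible set, the harvested energy is fully consumed,
i.e. `φ(R1*) + φ(R2*) = ψ(ρ*·a)`, and at least one of the two individual rate
constraints holds with equality. -/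
theorem stmt_8 (H1 H2 Np N : ℝ) (hH1 : 0 < H1) (hH2 : 0 < H2) (hNp : 0 < Np) (hN : 0 ≤ N)
    (Nu a : ℝ) (hNu : Nu = H2 + N) (ha : a = H1 + H2 + N)
    (φ ψ : ℝ → ℝ)
    (hφc : ContinuousOn φ (Set.Ici 0)) (hψc : ContinuousOn ψ (Set.Ici 0))
    (hφmap : ∀ x : ℝ, 0 ≤ x → 0 ≤ φ x) (hψmap : ∀ x : ℝ, 0 ≤ x → 0 ≤ ψ x)
    (hφ : StrictMonoOn φ (Set.Ici 0)) (hψ : StrictMonoOn ψ (Set.Ici 0))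
    (hφ0 : φ 0 = 0) (hψ0 : ψ 0 = 0)
    (Feas : ℝ → ℝ → ℝ → Prop)
    (hFeas : ∀ ρ R1 R2 : ℝ, Feas ρ R1 R2 ↔
      ρ ∈ Set.Icc (0 : ℝ) 1 ∧ 0 ≤ R1 ∧ 0 ≤ R2 ∧
      R1 ≤ (1/2) * Real.logb 2 (1 + (1 - ρ) * H1 / ((1 - ρ) * Nu + Np)) ∧
      R2 ≤ (1/2) * Real.logb 2 (1 + (1 - ρ) * H2 / ((1 - ρ) * N + Np)) ∧
      φ R1 + φ R2 ≤ ψ (ρ * a))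
    (ρs R1s R2s : ℝ) (hfeas : Feas ρs R1s R2s)
    (hmax : ∀ ρ R1 R2 : ℝ, Feas ρ R1 R2 → R1 + R2 ≤ R1s + R2s) :
    φ R1s + φ R2s = ψ (ρs * a) ∧
    (R1s = (1/2) * Real.logb 2 (1 + (1 - ρs) * H1 / ((1 - ρs) * Nu + Np)) ∨
     R2s = (1/2) * Real.logb 2 (1 + (1 - ρs) * H2 / ((1 - ρs) * N + Np))) := by
  have hNu0 : 0 ≤ Nu := by linarith
  have ha0 : 0 < a := by linarith
  obtain ⟨⟨hρ0, hρ1⟩, hR1, hR2, hC1, hC2, hE⟩ := (hFeas _ _ _).1 hfeas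
  have key : ∀ ρ ∈ Set.Icc (0 : ℝ) 1,
      R1s < (1/2) * Real.logb 2 (1 + (1 - ρ) * H1 / ((1 - ρ) * Nu + Np)) →
      R2s ≤ (1/2) * Real.logb 2 (1 + (1 - ρ) * H2 / ((1 - ρ) * N + Np)) →
      φ R1s + φ R2s < ψ (ρ * a) → False := by
    intro ρ hρ h1 h2 h3
    have hc : Tendsto φ (𝓝[>] R1s) (𝓝 (φ R1s)) :=
      (hφc R1s hR1).mono_left (nhdsWithin_mono _ fun x hx => hR1.trans (le_of_lt hx))
    have e1 : ∀ᶠ r in 𝓝[>] R1s, φ r < ψ (ρ * a) - φ R2s :=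
      hc.eventually_lt_const (by linarith)
    have e2 := (Ioo_mem_nhdsGT h1)
    obtain ⟨r, hr1, hr2⟩ := (e1.and e2).exists
    have := hmax ρ r R2s ((hFeas _ _ _).2
      ⟨hρ, hR1.trans hr2.1.le, hR2, hr2.2.le, h2, by linarith⟩)
    linarith [hr2.1]
  have hEq : φ R1s + φ R2s = ψ (ρs * a) := by
    by_contra hne
    have hlt := lt_of_le_of_ne hE hne
    have hpos : 0 < ρs := by
      rcases hρ0.eq_or_lt with h | h
      · rw [← h, zero_mul, hψ0] at hlt
        linarith [hφmap _ hR1, hφmap _ hR2]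
      · exact h
    have hc : ContinuousOn (fun x => ψ (x * a)) (Set.Ici 0) :=
      hψc.comp (by fun_prop) fun x hx => mul_nonneg hx ha0.le
    have hc' : Tendsto (fun x => ψ (x * a)) (𝓝[<] ρs) (𝓝 (ψ (ρs * a))) :=
      (hc.continuousAt (Ici_mem_nhds hpos)).tendsto.mono_left nhdsWithin_le_nhds
    obtain ⟨r, hr1, hr2⟩ :=
      ((hc'.eventually_const_lt hlt).and (Ioo_mem_nhdsLT hpos)).exists
    exact key r ⟨hr2.1.le, hr2.2.le.trans hρ1⟩
      (hC1.trans_lt (cap_anti H1 Nu Np hH1 hNu0 hNp r ρs hr2.2 hρ1))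
      (hC2.trans (cap_anti H2 N Np hH2 hN hNp r ρs hr2.2 hρ1).le) hr1
  refine ⟨hEq, ?_⟩
  by_contra hne
  rw [not_or] at hne
  have l1 := lt_of_le_of_ne hC1 hne.1
  have l2 := lt_of_le_of_ne hC2 hne.2
  have hlt1 : ρs < 1 := by
    rcases hρ1.eq_or_lt with h | h
    · rw [h] at l1
      norm_num at l1
      linarith
    · exact h
  have c1 := (cap_cont H1 Nu Np hH1 hNu0 hNp ρs hρ1).tendsto.mono_left
    (nhdsWithin_le_nhds (s := Set.Ioi ρs))
  have c2 := (cap_cont H2 N Np hH2 hN hNp ρs hρ1).tendsto.mono_left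
    (nhdsWithin_le_nhds (s := Set.Ioi ρs))
  obtain ⟨r, ⟨hr1, hr2⟩, hr3⟩ := (((c1.eventually_const_lt l1).and
    (c2.eventually_const_lt l2)).and (Ioo_mem_nhdsGT hlt1)).exists
  refine key r ⟨hρ0.trans hr3.1.le, hr3.2.le⟩ hr1 hr2.le ?_
  rw [hEq]
  exact hψ (mul_nonneg hρ0 ha0.le) (mul_nonneg (hρ0.trans hr3.1.le) ha0.le)
    (mul_lt_mul_of_pos_right hr3.1 ha0)
end

section
/- Let A, B, Np, β, η be positive reals and N ≥ 0; set a = A + B + N, ρ₂ = βB/(βB + η·a·Np), and assume ρ₂ ≤ ρ ≤ ρ₁ where ρ₁ is the smaller root of Q(ρ) = −B(η·a·Np + βB)ρ² + (η·a·Np(B + Np) + β(2B² + (A+B)Np))ρ − β(B² + A·Np + B·Np). Define R2(ρ) = (1/2)·log₂(1 + (1−ρ)B/Np) and R1(ρ) = (1/2)·log₂(1 + η·ρ·a/β − (1−ρ)B/Np). Then: (i) η·ρ·a/β − (1−ρ)B/Np ≥ 0, so R1(ρ) is well defined and nonnegative; (ii) R1(ρ) ≤ (1/2)·log₂(1 +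 (1−ρ)A/((1−ρ)B + Np)); and (iii) β(2^{2·R1(ρ)} − 1) + β(2^{2·R2(ρ)} − 1) = η·ρ·a. Hence (ρ, R1(ρ), R2(ρ)) is feasible for the SIC sum-rate problem with the decoding-cost constraint satisfied with equality. -/
/-- Classical PS-SWIPT MAC with SIC, linear EH model and convex decoding cost
(feasibility of Lemma 4's candidate point): for `ρ₂ ≤ ρ ≤ ρ₁`, where `ρ₁` is
the smaller root of the feasibility quadratic `Q`, the rates
`R2(ρ) = (1/2)log₂(1 + (1−ρ)B/Np)` and
`R1(ρ) = (1/2)log₂(1 + ηρa/β − (1−ρ)B/Np)` are well defined, `R1(ρ)`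
satisfies user 1's SIC rate constraint, and the decoding-cost constraint
holds with equality. -/
theorem stmt_9 (A B Np β η N : ℝ) (hA : 0 < A) (hB : 0 < B) (hNp : 0 < Np)
    (hβ : 0 < β) (hη : 0 < η) (hN : 0 ≤ N)
    (a : ℝ) (ha : a = A + B + N)
    (ρ₂ : ℝ) (hρ₂ : ρ₂ = β * B / (β * B + η * a * Np))
    (Q : ℝ → ℝ)
    (hQ : ∀ x : ℝ, Q x = -(B * (η * a * Np + β * B)) * x ^ 2
      + (η * a * Np * (B + Np) + β * (2 * B ^ 2 + (A + B) * Np)) * x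
      - β * (B ^ 2 + A * Np + B * Np))
    (ρ₁ : ℝ) (hroot : Q ρ₁ = 0) (hsmaller : ∀ r : ℝ, Q r = 0 → ρ₁ ≤ r)
    (ρ : ℝ) (hρl : ρ₂ ≤ ρ) (hρu : ρ ≤ ρ₁)
    (R1 R2 : ℝ)
    (hR2 : R2 = (1/2) * Real.logb 2 (1 + (1 - ρ) * B / Np))
    (hR1 : R1 = (1/2) * Real.logb 2 (1 + η * ρ * a / β - (1 - ρ) * B / Np)) :
    (0 ≤ η * ρ * a / β - (1 - ρ) * B / Np ∧ 0 ≤ R1) ∧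
    R1 ≤ (1/2) * Real.logb 2 (1 + (1 - ρ) * A / ((1 - ρ) * B + Np)) ∧
    β * ((2 : ℝ) ^ (2 * R1) - 1) + β * ((2 : ℝ) ^ (2 * R2) - 1) = η * ρ * a := by
  have hapos : 0 < a := by rw [ha]; linarith
  have hc : 0 < η * a * Np := by positivity
  have hQc : Continuous Q := by
    have : Q = fun x : ℝ => -(B * (η * a * Np + β * B)) * x ^ 2
      + (η * a * Np * (B + Np) + β * (2 * B ^ 2 + (A + B) * Np)) * x
      - β * (B ^ 2 + A * Np + B * Np) := funext hQ
    rw [this]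
    fun_prop
  have hQ0 : Q 0 < 0 := by
    have h : 0 < β * (B ^ 2 + A * Np + B * Np) := by positivity
    rw [hQ]
    linarith
  have hkey : ∀ y : ℝ, 0 ≤ y → 0 ≤ Q y → ρ₁ ≤ y := by
    intro y hy hQy
    obtain ⟨r, hr, hr0⟩ := intermediate_value_Icc hy hQc.continuousOn
      (show (0 : ℝ) ∈ Set.Icc (Q 0) (Q y) from ⟨hQ0.le, hQy⟩)
    exact (hsmaller r hr0).trans hr.2
  have hQ1 : 0 < Q 1 := by
    have h : Q 1 = η * a * Np * Np := by rw [hQ]; ring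
    rw [h]; positivity
  have hρ1 : ρ ≤ 1 := hρu.trans (hkey 1 zero_le_one hQ1.le)
  have hD : 0 < β * B + η * a * Np := by positivity
  have hρ0 : 0 ≤ ρ := by
    refine le_trans ?_ hρl
    rw [hρ₂]; positivity
  have hQρ : Q ρ ≤ 0 := by
    by_contra h
    push Not at h
    have h1 : ρ = ρ₁ := le_antisymm hρu (hkey ρ hρ0 h.le)
    rw [h1, hroot] at h
    exact lt_irrefl _ h
  have hlow : β * B ≤ ρ * (β * B + η * a * Np) := by
    rw [hρ₂, div_le_iff₀ hD] at hρl
    exact hρl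
  have hX : η * ρ * a / β - (1 - ρ) * B / Np
      = (η * a * Np * ρ - β * (1 - ρ) * B) / (β * Np) := by
    field_simp
  have hX0 : 0 ≤ η * ρ * a / β - (1 - ρ) * B / Np := by
    rw [hX]
    apply div_nonneg _ (by positivity)
    linarith
  have h1ρ : 0 ≤ 1 - ρ := by linarith
  have hE : 0 < (1 - ρ) * B + Np := by positivity
  have hXle : η * ρ * a / β - (1 - ρ) * B / Np ≤ (1 - ρ) * A / ((1 - ρ) * B + Np) := by
    rw [hX, div_le_div_iff₀ (by positivity) hE]
    rw [hQ] at hQρ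
    linarith
  have hY : 0 ≤ (1 - ρ) * B / Np := by positivity
  refine ⟨⟨hX0, ?_⟩, ?_, ?_⟩
  · rw [hR1]
    have := Real.logb_nonneg (b := 2) (by norm_num)
      (show 1 ≤ 1 + η * ρ * a / β - (1 - ρ) * B / Np by linarith)
    positivity
  · rw [hR1]
    have := Real.logb_le_logb_of_le (b := 2) (by norm_num)
      (show 0 < 1 + η * ρ * a / β - (1 - ρ) * B / Np by linarith)
      (show _ ≤ 1 + (1 - ρ) * A / ((1 - ρ) * B + Np) by linarith)
    linarith
  · have e1 : (2 : ℝ) ^ (2 * R1) = 1 + η * ρ * a / β - (1 - ρ) * B / Np := by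
      rw [hR1, ← mul_assoc, show (2 : ℝ) * (1 / 2) = 1 by norm_num, one_mul,
        Real.rpow_logb (by norm_num) (by norm_num) (by linarith)]
    have e2 : (2 : ℝ) ^ (2 * R2) = 1 + (1 - ρ) * B / Np := by
      rw [hR2, ← mul_assoc, show (2 : ℝ) * (1 / 2) = 1 by norm_num, one_mul,
        Real.rpow_logb (by norm_num) (by norm_num) (by linarith)]
    rw [e1, e2]
    field_simp
    ring
end

section
/- Let A, B, Np, β, η be positive reals and N ≥ 0; set a = A + B + N, C = A + B, Δ = Np·sqrt( (η·a·B − βC)² + η·a·(η·a·Np² + 2η·a·Np·B + 2βC·Np + 4βB²) ), and Q(ρ) = −B(η·a·Np + βB)ρ² + (η·a·Np(B + Np) + β(2B² + C·Np))ρ − β(B² + A·Np + B·Np). Then: (i) Q(0) = −β(B² + A·Np + B·Np) < 0; (ii) Q(1) = η·a·Np² > 0; (iii) Q has exactly two real roots, the smaller of which equals ρ₁ = (1/2)·(1 + (βB² + βC·Np + η·a·Np² − Δ)/(βB² + η·a·Np·B)) and satisfies 0 < ρ₁ < 1, while the larger root is strictly greater than 1. Consequently Q(ρ) ≤ 0 for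 all ρ ∈ [0, ρ₁]. -/
/-- Classical PS-SWIPT MAC with SIC (root structure of the feasibility
quadratic `Q` from Appendix B): `Q(0) < 0`, `Q(1) = ηaNp² > 0`, `Q` has
exactly two real roots — the smaller being
`ρ₁ = (1/2)(1 + (βB² + βCNp + ηaNp² − Δ)/(βB² + ηaNpB)) ∈ (0,1)` and the
larger exceeding `1` — and consequently `Q ≤ 0` on `[0, ρ₁]`. -/
theorem stmt_12 (A B Np β η N : ℝ) (hA : 0 < A) (hB : 0 < B) (hNp : 0 < Np)
    (hβ : 0 < β) (hη : 0 < η) (hN : 0 ≤ N)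
    (a C : ℝ) (ha : a = A + B + N) (hC : C = A + B)
    (Δ : ℝ)
    (hΔ : Δ = Np * Real.sqrt ((η * a * B - β * C) ^ 2
      + η * a * (η * a * Np ^ 2 + 2 * η * a * Np * B + 2 * β * C * Np + 4 * β * B ^ 2)))
    (Q : ℝ → ℝ)
    (hQ : ∀ x : ℝ, Q x = -(B * (η * a * Np + β * B)) * x ^ 2
      + (η * a * Np * (B + Np) + β * (2 * B ^ 2 + C * Np)) * x
      - β * (B ^ 2 + A * Np + B * Np))
    (ρ₁ : ℝ)
    (hρ₁ : ρ₁ = (1/2) * (1 + (β * B ^ 2 + β * C * Np + η * a * Np ^ 2 - Δ)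
      / (β * B ^ 2 + η * a * Np * B))) :
    (Q 0 = -(β * (B ^ 2 + A * Np + B * Np)) ∧ Q 0 < 0) ∧
    (Q 1 = η * a * Np ^ 2 ∧ 0 < Q 1) ∧
    (Q ρ₁ = 0 ∧ 0 < ρ₁ ∧ ρ₁ < 1 ∧
      ∃ r : ℝ, Q r = 0 ∧ 1 < r ∧ ρ₁ < r ∧ ∀ s : ℝ, Q s = 0 → s = ρ₁ ∨ s = r) ∧
    ∀ ρ ∈ Set.Icc (0 : ℝ) ρ₁, Q ρ ≤ 0 := by
  have ha0 : 0 < a := by rw [ha]; positivity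
  have hC0 : 0 < C := by rw [hC]; positivity
  have hX : 0 ≤ (η * a * B - β * C) ^ 2
      + η * a * (η * a * Np ^ 2 + 2 * η * a * Np * B + 2 * β * C * Np + 4 * β * B ^ 2) := by
    positivity
  have hΔ0 : 0 ≤ Δ := by rw [hΔ]; positivity
  have hΔ2 : Δ ^ 2 = Np ^ 2 * ((η * a * B - β * C) ^ 2
      + η * a * (η * a * Np ^ 2 + 2 * η * a * Np * B + 2 * β * C * Np + 4 * β * B ^ 2)) := by
    rw [hΔ, mul_pow, Real.sq_sqrt hX]
  clear hΔ hX
  have hAC : A = C - B := by linarith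
  obtain ⟨D, hD⟩ : ∃ D, D = β * B ^ 2 + η * a * Np * B := ⟨_, rfl⟩
  obtain ⟨G, hG⟩ : ∃ G, G = β * B ^ 2 + β * C * Np + η * a * Np ^ 2 := ⟨_, rfl⟩
  obtain ⟨F, hF⟩ : ∃ F, F = β * (B ^ 2 + C * Np) := ⟨_, rfl⟩
  have hD0 : 0 < D := by rw [hD]; positivity
  have hF0 : 0 < F := by rw [hF]; positivity
  have hdisc : Δ ^ 2 = (D + G) ^ 2 - 4 * D * F := by rw [hΔ2, hD, hG, hF]; ring
  rw [← hD, ← hG] at hρ₁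
  have hQ' : ∀ x, Q x = -D * x ^ 2 + (D + G) * x - F := by
    intro x; rw [hQ, hD, hG, hF, hAC]; ring
  have hQ0 : Q 0 = -(β * (B ^ 2 + A * Np + B * Np)) := by rw [hQ]; ring
  have hQ1 : Q 1 = η * a * Np ^ 2 := by rw [hQ, hAC]; ring
  have hQ1p : 0 < Q 1 := by rw [hQ1]; positivity
  obtain ⟨r, hr⟩ : ∃ r, r = (1/2) * (1 + (G + Δ) / D) := ⟨_, rfl⟩
  have e1 : 2 * D * ρ₁ = D + G - Δ := by rw [hρ₁]; field_simp; ring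
  have e2 : 2 * D * r = D + G + Δ := by rw [hr]; field_simp; ring
  have hsum : D * (ρ₁ + r) = D + G := by linarith
  have hprod : D * (ρ₁ * r) = F := by
    have h : (4 * D) * (D * (ρ₁ * r)) = (4 * D) * F := by
      calc (4 * D) * (D * (ρ₁ * r)) = (2 * D * ρ₁) * (2 * D * r) := by ring
        _ = (D + G) ^ 2 - Δ ^ 2 := by rw [e1, e2]; ring
        _ = _ := by rw [hdisc]; ring
    exact mul_left_cancel₀ (by positivity) h
  have hfac : ∀ x, Q x = -(D * ((x - ρ₁) * (x - r))) := by
    intro x; rw [hQ', ← hsum, ← hprod]; ring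
  have hle : ρ₁ ≤ r := by
    have : 0 ≤ D * (r - ρ₁) := by linarith
    linarith [nonneg_of_mul_nonneg_right this hD0]
  have hneg : (1 - ρ₁) * (1 - r) < 0 := by
    rw [hfac] at hQ1p
    by_contra h
    have := mul_nonneg hD0.le (not_lt.mp h)
    linarith
  have h1 : ρ₁ < 1 ∧ 1 < r := by
    rcases mul_neg_iff.mp hneg with h | h
    · constructor <;> linarith [h.1, h.2]
    · exfalso; linarith [h.1, h.2]
  have hpos : 0 < ρ₁ := by
    have h : 0 < ρ₁ * r := by
      rw [← hprod] at hF0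
      exact (mul_pos_iff_of_pos_left hD0).mp hF0
    exact (mul_pos_iff_of_pos_right (by linarith [h1.2])).mp h
  refine ⟨⟨hQ0, ?_⟩, ⟨hQ1, hQ1p⟩, ⟨?_, hpos, h1.1, r, ?_, h1.2, h1.1.trans h1.2, ?_⟩, ?_⟩
  · rw [hQ0, neg_lt_zero]; positivity
  · rw [hfac]; ring
  · rw [hfac]; ring
  · intro s hs
    rw [hfac, neg_eq_zero] at hs
    rcases mul_eq_zero.mp hs with h | h
    · exact absurd h hD0.ne'
    · rcases mul_eq_zero.mp h with h | h
      · left; linarith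
      · right; linarith
  · intro x hx
    rw [hfac, neg_nonpos]
    exact mul_nonneg hD0.le
      (mul_nonneg_of_nonpos_of_nonpos (by linarith [hx.2]) (by linarith [hx.2]))
end

section
/- Let A, B, Np, β, η be positive reals and N ≥ 0; set a = A + B + N, C = A + B, ρ₂ = βB/(βB + η·a·Np), and let Q(ρ) = −B(η·a·Np + βB)ρ² + (η·a·Np(B + Np) + β(2B² + C·Np))ρ − β(B² + A·Np + B·Np) with smaller root ρ₁ as in Lemma 4. Then 0 < ρ₂ < 1, Q(ρ₂) ≤ 0, and consequently ρ₂ ≤ ρ₁. In other words, the smallest power-splitting factor ρ₂ for which the harvested power η·ρ·a covers the cost β(1−ρ)B/Np of decoding user 2's message does not exceed ρ₁, so the feasible interval [ρ₂, ρ₁] is nonempty. -/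
/-- Classical PS-SWIPT MAC with SIC: with `ρ₂ = βB/(βB + ηaNp)` (the smallest
PS factor for which the harvested power covers the cost of decoding user 2's
message) and `ρ₁` the smaller root of the feasibility quadratic `Q` (as in
Lemma 4), one has `0 < ρ₂ < 1`, `Q(ρ₂) ≤ 0`, and `ρ₂ ≤ ρ₁`; hence the
feasible interval `[ρ₂, ρ₁]` is nonempty. -/
theorem stmt_13 (A B Np β η N : ℝ) (hA : 0 < A) (hB : 0 < B) (hNp : 0 < Np)
    (hβ : 0 < β) (hη : 0 < η) (hN : 0 ≤ N)
    (a C : ℝ) (ha : a = A + B + N) (hC : C = A + B)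
    (ρ₂ : ℝ) (hρ₂ : ρ₂ = β * B / (β * B + η * a * Np))
    (Q : ℝ → ℝ)
    (hQ : ∀ x : ℝ, Q x = -(B * (η * a * Np + β * B)) * x ^ 2
      + (η * a * Np * (B + Np) + β * (2 * B ^ 2 + C * Np)) * x
      - β * (B ^ 2 + A * Np + B * Np))
    (Δ : ℝ)
    (hΔ : Δ = Np * Real.sqrt ((η * a * B - β * C) ^ 2
      + η * a * (η * a * Np ^ 2 + 2 * η * a * Np * B + 2 * β * C * Np + 4 * β * B ^ 2)))
    (ρ₁ : ℝ)
    (hρ₁ : ρ₁ = (1/2) * (1 + (β * B ^ 2 + β * C * Np + η * a * Np ^ 2 - Δ)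
      / (β * B ^ 2 + η * a * Np * B))) :
    (0 < ρ₂ ∧ ρ₂ < 1) ∧ Q ρ₂ ≤ 0 ∧ ρ₂ ≤ ρ₁ := by
  have ha0 : 0 < a := by linarith
  subst hC
  have he : 0 < η * a := mul_pos hη ha0
  rw [show 2 * η * a * Np * B = 2 * (η * a) * Np * B by ring] at hΔ
  generalize η * a = e at *
  have hD : 0 < β * B + e * Np := by positivity
  have hk : 0 < β * B ^ 2 + e * Np * B := by positivity
  refine ⟨⟨?_, ?_⟩, ?_, ?_⟩
  · rw [hρ₂]; positivity
  · rw [hρ₂, div_lt_one hD]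
    have : 0 < e * Np := by positivity
    linarith
  · have h : Q ρ₂ = -(β * e * Np ^ 2 * A) / (β * B + e * Np) := by
      rw [hQ, hρ₂, eq_div_iff hD.ne']
      have h2 : e * Np + β * B = β * B + e * Np := by ring
      rw [h2]
      field_simp
      ring
    rw [h]
    apply div_nonpos_of_nonpos_of_nonneg _ hD.le
    have : 0 < β * e * Np ^ 2 * A := by positivity
    linarith
  · have hs : Real.sqrt ((e * B - β * (A + B)) ^ 2
        + e * (e * Np ^ 2 + 2 * e * Np * B + 2 * β * (A + B) * Np + 4 * β * B ^ 2))
        ≤ e * B + e * Np + β * (A + B) := by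
      apply Real.sqrt_le_iff.mpr
      refine ⟨by positivity, ?_⟩
      have : 0 < β * B * A * e := by positivity
      nlinarith
    have hΔ' : Δ ≤ Np * (e * B + e * Np + β * (A + B)) := by
      rw [hΔ]; exact mul_le_mul_of_nonneg_left hs hNp.le
    have h2 : ρ₂ = β * B ^ 2 / (β * B ^ 2 + e * Np * B) := by
      rw [hρ₂, div_eq_div_iff hD.ne' hk.ne']; ring
    have h1 : ρ₁ = ((β * B ^ 2 + e * Np * B) + (β * B ^ 2 + β * (A + B) * Np + e * Np ^ 2 - Δ)) / 2
        / (β * B ^ 2 + e * Np * B) := by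
      rw [hρ₁, eq_div_iff hk.ne', mul_assoc, add_mul, div_mul_cancel₀ _ hk.ne']; ring
    rw [h1, h2]
    apply div_le_div_of_nonneg_right _ hk.le
    nlinarith
end

section
/- Consider the PS-SWIPT MAC with user cooperation. Let h1, h2, b, c, PU1, PU2, Np > 0 and N ≥ 0, let g(x) = (1/2)·log₂(1+x), and let φ, φ1, φ2, ψ : [0,∞) → [0,∞) be continuous and strictly increasing. For variables (ρ, P12, P21, Pu1, Pu2) ∈ [0,1] × [0,∞)⁴ set S = h1²(P12 + Pu1) + h2²(P21 + Pu2) + 2·h1·h2·sqrt(Pu1·Pu2), and consider the constraints: (i) φ1(g(c·P21)) + P12 + Pu1 ≤ PU1; (ii) φ2(g(b·P12)) + P21 + Pu2 ≤ PU2; (iii) φ(g(b·P12) + g(c·P21)) ≤ ψ(ρ·(S + N)); (iv) g(b·P12) + g(c·P21) ≤ g((1−ρ)S/((1−ρ)N + Np)). Let μ1, μ2 > 0 and suppose (ρ*, P12*, P21*, Pu1*, Pu2*) maximizes μ1·g(b·P12) + μ2·g(c·P21) over the feasible set, with 0 < ρ* < 1, Pu1* > 0 and Pu2* > 0. Then all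 four constraints (i)–(iv) hold with equality at the maximizer. -/
lemma cont_ext_max {f : ℝ → ℝ} (hf : ContinuousOn f (Set.Ici 0)) :
    Continuous (fun x => f (max x 0)) := by
  rw [← continuousOn_univ]
  exact hf.comp (by fun_prop) (fun x _ => Set.mem_Ici.2 (le_max_right _ _))

/-- PS-SWIPT MAC with user cooperation (Lemma 5): at a maximizer of the
weighted sum rate `μ1·g(bP12) + μ2·g(cP21)` with interior PS factor
`0 < ρ* < 1` and strictly positive common-message powers, all four
constraints — the two users' power budgets, the destination's decoding-cost
constraint, and the sum-rate constraint — hold with equality. -/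
theorem stmt_16 (h1 h2 b c PU1 PU2 Np N : ℝ)
    (hh1 : 0 < h1) (hh2 : 0 < h2) (hb : 0 < b) (hc : 0 < c)
    (hPU1 : 0 < PU1) (hPU2 : 0 < PU2) (hNp : 0 < Np) (hN : 0 ≤ N)
    (g : ℝ → ℝ) (hg : ∀ x : ℝ, g x = (1/2) * Real.logb 2 (1 + x))
    (φ φ1 φ2 ψ : ℝ → ℝ)
    (hφc : ContinuousOn φ (Set.Ici 0)) (hφ1c : ContinuousOn φ1 (Set.Ici 0))
    (hφ2c : ContinuousOn φ2 (Set.Ici 0)) (hψc : ContinuousOn ψ (Set.Ici 0))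
    (hφ : StrictMonoOn φ (Set.Ici 0)) (hφ1 : StrictMonoOn φ1 (Set.Ici 0))
    (hφ2 : StrictMonoOn φ2 (Set.Ici 0)) (hψ : StrictMonoOn ψ (Set.Ici 0))
    (hφmap : ∀ x : ℝ, 0 ≤ x → 0 ≤ φ x) (hφ1map : ∀ x : ℝ, 0 ≤ x → 0 ≤ φ1 x)
    (hφ2map : ∀ x : ℝ, 0 ≤ x → 0 ≤ φ2 x) (hψmap : ∀ x : ℝ, 0 ≤ x → 0 ≤ ψ x)
    (S : ℝ → ℝ → ℝ → ℝ → ℝ)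
    (hS : ∀ P12 P21 Pu1 Pu2 : ℝ, S P12 P21 Pu1 Pu2
      = h1 ^ 2 * (P12 + Pu1) + h2 ^ 2 * (P21 + Pu2) + 2 * h1 * h2 * Real.sqrt (Pu1 * Pu2))
    (Feas : ℝ → ℝ → ℝ → ℝ → ℝ → Prop)
    (hFeas : ∀ ρ P12 P21 Pu1 Pu2 : ℝ, Feas ρ P12 P21 Pu1 Pu2 ↔
      ρ ∈ Set.Icc (0 : ℝ) 1 ∧ 0 ≤ P12 ∧ 0 ≤ P21 ∧ 0 ≤ Pu1 ∧ 0 ≤ Pu2 ∧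
      φ1 (g (c * P21)) + P12 + Pu1 ≤ PU1 ∧
      φ2 (g (b * P12)) + P21 + Pu2 ≤ PU2 ∧
      φ (g (b * P12) + g (c * P21)) ≤ ψ (ρ * (S P12 P21 Pu1 Pu2 + N)) ∧
      g (b * P12) + g (c * P21)
        ≤ g ((1 - ρ) * S P12 P21 Pu1 Pu2 / ((1 - ρ) * N + Np)))
    (μ1 μ2 : ℝ) (hμ1 : 0 < μ1) (hμ2 : 0 < μ2)
    (ρs P12s P21s Pu1s Pu2s : ℝ)
    (hfeas : Feas ρs P12s P21s Pu1s Pu2s)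
    (hρs0 : 0 < ρs) (hρs1 : ρs < 1) (hPu1s : 0 < Pu1s) (hPu2s : 0 < Pu2s)
    (hmax : ∀ ρ P12 P21 Pu1 Pu2 : ℝ, Feas ρ P12 P21 Pu1 Pu2 →
      μ1 * g (b * P12) + μ2 * g (c * P21) ≤ μ1 * g (b * P12s) + μ2 * g (c * P21s)) :
    φ1 (g (c * P21s)) + P12s + Pu1s = PU1 ∧
    φ2 (g (b * P12s)) + P21s + Pu2s = PU2 ∧
    φ (g (b * P12s) + g (c * P21s)) = ψ (ρs * (S P12s P21s Pu1s Pu2s + N)) ∧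
    g (b * P12s) + g (c * P21s)
      = g ((1 - ρs) * S P12s P21s Pu1s Pu2s / ((1 - ρs) * N + Np)) := by
  have g0 : ∀ x, 0 ≤ x → 0 ≤ g x := by
    intro x hx
    rw [hg]
    have := Real.logb_nonneg (b := 2) (by norm_num) (show (1:ℝ) ≤ 1 + x by linarith)
    positivity
  have gm : ∀ x y, 0 ≤ x → x < y → g x < g y := by
    intro x y hx hxy
    rw [hg, hg]
    have := Real.logb_lt_logb (b := 2) (by norm_num) (show (0:ℝ) < 1 + x by linarith)
      (show 1 + x < 1 + y by linarith)
    linarith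
  have gc : ContinuousOn g (Set.Ici 0) := by
    have : g = fun x => (1/2) * (Real.log (1 + x) / Real.log 2) := by
      funext x; rw [hg]; rfl
    rw [this]
    intro x hx
    have hx' : (0:ℝ) ≤ x := hx
    apply ContinuousAt.continuousWithinAt
    have : (1 + x) ≠ 0 := by linarith
    have h2 : ContinuousAt (fun x : ℝ => Real.log (1 + x)) x :=
      ContinuousAt.log (by fun_prop) this
    exact (h2.div_const _).const_mul _
  have cg := cont_ext_max gc
  have cφ := cont_ext_max hφc
  have cφ2 := cont_ext_max hφ2c
  have cψ := cont_ext_max hψc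
  have S0 : ∀ p q u v : ℝ, 0 ≤ p → 0 ≤ q → 0 ≤ u → 0 ≤ v → 0 ≤ S p q u v := by
    intro p q u v _ _ _ _
    rw [hS]; positivity
  obtain ⟨-, hp, hq, -, -, hi, hii, hiii, hiv⟩ := (hFeas _ _ _ _ _).1 hfeas
  -- strict slack in (iii) and (iv) is impossible
  have key : ∀ ρ u v : ℝ, 0 ≤ ρ → ρ ≤ 1 → 0 < u → 0 < v →
      φ1 (g (c * P21s)) + P12s + u ≤ PU1 →
      φ2 (g (b * P12s)) + P21s + v ≤ PU2 →
      φ (g (b * P12s) + g (c * P21s)) < ψ (ρ * (S P12s P21s u v + N)) →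
      g (b * P12s) + g (c * P21s) < g ((1 - ρ) * S P12s P21s u v / ((1 - ρ) * N + Np)) →
      False := by
    intro ρ u v hρ0 hρ1 hu hv k1 k2 k3 k4
    let G : ℝ → ℝ := fun t => g (max (b * (P12s + t)) 0)
    have hG : Continuous G := cg.comp (by fun_prop : Continuous fun t : ℝ => b * (P12s + t))
    have hGe : ∀ t, 0 ≤ t → G t = g (b * (P12s + t)) := by
      intro t ht
      have : 0 ≤ b * (P12s + t) := by positivity
      simp only [G, max_eq_left this]
    let F : ℝ → ℝ := fun t => φ2 (max (G t) 0)
    have hF : Continuous F := cφ2.comp hG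
    have hFe : ∀ t, 0 ≤ t → F t = φ2 (g (b * (P12s + t))) := by
      intro t ht
      have : 0 ≤ g (b * (P12s + t)) := g0 _ (by positivity)
      simp only [F, hGe t ht, max_eq_left this]
    let V : ℝ → ℝ := fun t => v - (F t - F 0)
    have hV : Continuous V := by fun_prop
    have hV0 : V 0 = v := by simp [V]
    let T : ℝ → ℝ := fun t => S (P12s + t) P21s (u - t) (V t)
    have hT : Continuous T := by
      simp only [T, hS]
      have : Continuous fun t => Real.sqrt ((u - t) * V t) := Real.continuous_sqrt.comp (by fun_prop)
      fun_prop
    have hT0 : T 0 = S P12s P21s u v := by simp [T, hV0]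
    have hG0 : G 0 = g (b * P12s) := by rw [hGe 0 le_rfl, add_zero]
    have hden : 0 < (1 - ρ) * N + Np := by
      have : 0 ≤ (1 - ρ) * N := mul_nonneg (by linarith) hN
      linarith
    have gq : 0 ≤ g (c * P21s) := g0 _ (by positivity)
    have gp : 0 ≤ g (b * P12s) := g0 _ (by positivity)
    have hSn := S0 P12s P21s u v hp hq hu.le hv.le
    have c3 : Continuous fun t => φ (max (G t + g (c * P21s)) 0) :=
      cφ.comp (hG.add continuous_const)
    have c3r : Continuous fun t => ψ (max (ρ * (T t + N)) 0) :=
      cψ.comp (by fun_prop : Continuous fun t => ρ * (T t + N))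
    have c4 : Continuous fun t => g (max ((1 - ρ) * T t / ((1 - ρ) * N + Np)) 0) :=
      cg.comp (by fun_prop : Continuous fun t => (1 - ρ) * T t / ((1 - ρ) * N + Np))
    have e1 : ∀ᶠ t in nhds (0:ℝ), t < u := Iio_mem_nhds hu
    have e2 : ∀ᶠ t in nhds (0:ℝ), 0 < V t :=
      hV.continuousAt.eventually (Ioi_mem_nhds (by rw [hV0]; exact hv))
    have e3 : ∀ᶠ t in nhds (0:ℝ), φ (max (G t + g (c * P21s)) 0) < ψ (max (ρ * (T t + N)) 0) := by
      apply c3.continuousAt.eventually_lt c3r.continuousAt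
      rw [hG0, hT0, max_eq_left (by positivity), max_eq_left (by positivity)]
      exact k3
    have e4 : ∀ᶠ t in nhds (0:ℝ),
        G t + g (c * P21s) < g (max ((1 - ρ) * T t / ((1 - ρ) * N + Np)) 0) := by
      apply (hG.add continuous_const).continuousAt.eventually_lt c4.continuousAt
      change G 0 + g (c * P21s) < _
      rw [hG0, hT0, max_eq_left (div_nonneg (mul_nonneg (by linarith) hSn) hden.le)]
      exact k4
    have e := (((e1.and e2).and (e3.and e4)).filter_mono
      (nhdsWithin_le_nhds (s := Set.Ioi (0:ℝ)))).and self_mem_nhdsWithin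
    obtain ⟨t, ⟨⟨t1, t2⟩, t3, t4⟩, t0⟩ := e.exists
    have t0 : 0 < t := t0
    have hTn : 0 ≤ T t := S0 _ _ _ _ (by linarith) hq (by linarith) t2.le
    have gpt : 0 ≤ g (b * (P12s + t)) := g0 _ (by positivity)
    rw [hGe t t0.le, max_eq_left (by positivity), max_eq_left (by positivity)] at t3
    rw [hGe t t0.le, max_eq_left (div_nonneg (mul_nonneg (by linarith) hTn) hden.le)] at t4
    have hF0 := hFe 0 le_rfl
    rw [add_zero] at hF0
    have hfe : Feas ρ (P12s + t) P21s (u - t) (V t) := by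
      rw [hFeas]
      refine ⟨⟨hρ0, hρ1⟩, by linarith, hq, by linarith, t2.le, by linarith, ?_, t3.le, t4.le⟩
      rw [← hFe t t0.le]
      simp only [V]
      linarith
    have hm := hmax _ _ _ _ _ hfe
    have := gm (b * P12s) (b * (P12s + t)) (by positivity) (by nlinarith)
    nlinarith
  have hSpos : ∀ u v : ℝ, 0 < u → 0 < v → 0 < S P12s P21s u v := by
    intro u v hu hv
    rw [hS]; positivity
  have Sp := hSpos _ _ hPu1s hPu2s
  have gq : 0 ≤ g (c * P21s) := g0 _ (by positivity)
  have gp : 0 ≤ g (b * P12s) := g0 _ (by positivity)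
  have hden : ∀ ρ, ρ ≤ 1 → 0 < (1 - ρ) * N + Np := by
    intro ρ h
    have : 0 ≤ (1 - ρ) * N := mul_nonneg (by linarith) hN
    linarith
  -- a strict increase of S gives slack in both (iii) and (iv)
  have up : ∀ u v : ℝ, 0 < u → 0 < v →
      φ1 (g (c * P21s)) + P12s + u ≤ PU1 →
      φ2 (g (b * P12s)) + P21s + v ≤ PU2 →
      S P12s P21s Pu1s Pu2s < S P12s P21s u v → False := by
    intro u v hu hv k1 k2 hlt
    refine key ρs u v hρs0.le hρs1.le hu hv k1 k2 (lt_of_le_of_lt hiii ?_) (lt_of_le_of_lt hiv ?_)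
    · apply hψ
      · exact Set.mem_Ici.2 (by positivity)
      · have := hSpos u v hu hv
        exact Set.mem_Ici.2 (by positivity)
      · exact mul_lt_mul_of_pos_left (by linarith) hρs0
    · have d := hden ρs hρs1.le
      apply gm
      · exact div_nonneg (mul_nonneg (by linarith) Sp.le) d.le
      · exact div_lt_div_of_pos_right (mul_lt_mul_of_pos_left hlt (by linarith)) d
  refine ⟨?_, ?_, ?_, ?_⟩
  · by_contra hne
    have hlt := lt_of_le_of_ne hi hne
    refine up (PU1 - φ1 (g (c * P21s)) - P12s) Pu2s (by linarith) hPu2s (by linarith) hii ?_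
    have hu : Pu1s < PU1 - φ1 (g (c * P21s)) - P12s := by linarith
    generalize PU1 - φ1 (g (c * P21s)) - P12s = u at hu
    rw [hS, hS]
    have : Real.sqrt (Pu1s * Pu2s) ≤ Real.sqrt (u * Pu2s) := by gcongr
    have h2' : h1 ^ 2 * (P12s + Pu1s) < h1 ^ 2 * (P12s + u) := by gcongr
    have h3 : 2 * h1 * h2 * Real.sqrt (Pu1s * Pu2s) ≤ 2 * h1 * h2 * Real.sqrt (u * Pu2s) := by gcongr
    linarith
  · by_contra hne
    have hlt := lt_of_le_of_ne hii hne
    refine up Pu1s (PU2 - φ2 (g (b * P12s)) - P21s) hPu1s (by linarith) hi (by linarith) ?_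
    have hu : Pu2s < PU2 - φ2 (g (b * P12s)) - P21s := by linarith
    generalize PU2 - φ2 (g (b * P12s)) - P21s = u at hu
    rw [hS, hS]
    have : Real.sqrt (Pu1s * Pu2s) ≤ Real.sqrt (Pu1s * u) := by gcongr
    have h2' : h2 ^ 2 * (P21s + Pu2s) < h2 ^ 2 * (P21s + u) := by gcongr
    have h3 : 2 * h1 * h2 * Real.sqrt (Pu1s * Pu2s) ≤ 2 * h1 * h2 * Real.sqrt (Pu1s * u) := by gcongr
    linarith
  · by_contra hne
    have hlt := lt_of_le_of_ne hiii hne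
    have cc : Continuous fun ρ => ψ (max (ρ * (S P12s P21s Pu1s Pu2s + N)) 0) :=
      cψ.comp (by fun_prop : Continuous fun ρ : ℝ => ρ * (S P12s P21s Pu1s Pu2s + N))
    have e1 : ∀ᶠ ρ in nhds ρs, φ (g (b * P12s) + g (c * P21s)) <
        ψ (max (ρ * (S P12s P21s Pu1s Pu2s + N)) 0) := by
      apply cc.continuousAt.eventually (Ioi_mem_nhds _)
      beta_reduce
      rw [max_eq_left (by positivity)]
      exact hlt
    have e2 : ∀ᶠ ρ in nhds ρs, 0 < ρ := Ioi_mem_nhds hρs0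
    have e := ((e1.and e2).filter_mono
      (nhdsWithin_le_nhds (s := Set.Iio ρs))).and self_mem_nhdsWithin
    obtain ⟨ρ, ⟨r1, r2⟩, r3⟩ := e.exists
    have r3 : ρ < ρs := r3
    rw [max_eq_left (by positivity)] at r1
    refine key ρ _ _ r2.le (by linarith) hPu1s hPu2s hi hii r1 (lt_of_le_of_lt hiv ?_)
    have d := hden ρs hρs1.le
    apply gm
    · exact div_nonneg (mul_nonneg (by linarith) Sp.le) d.le
    · rw [div_lt_div_iff₀ d (hden ρ (by linarith))]
      have : 0 < (ρs - ρ) * (S P12s P21s Pu1s Pu2s * Np) :=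
        mul_pos (by linarith) (mul_pos Sp hNp)
      linarith
  · by_contra hne
    have hlt := lt_of_le_of_ne hiv hne
    have d := hden ρs hρs1.le
    have cc : ContinuousAt (fun ρ => g (max ((1 - ρ) * S P12s P21s Pu1s Pu2s /
        ((1 - ρ) * N + Np)) 0)) ρs := by
      have : ContinuousAt (fun ρ : ℝ => (1 - ρ) * S P12s P21s Pu1s Pu2s / ((1 - ρ) * N + Np)) ρs :=
        ContinuousAt.div (by fun_prop) (by fun_prop) d.ne'
      exact ContinuousAt.comp (g := fun x => g (max x 0)) cg.continuousAt this
    have e1 : ∀ᶠ ρ in nhds ρs, g (b * P12s) + g (c * P21s) <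
        g (max ((1 - ρ) * S P12s P21s Pu1s Pu2s / ((1 - ρ) * N + Np)) 0) := by
      apply cc.eventually (Ioi_mem_nhds _)
      beta_reduce
      rw [max_eq_left (div_nonneg (mul_nonneg (by linarith) Sp.le) d.le)]
      exact hlt
    have e2 : ∀ᶠ ρ in nhds ρs, ρ < 1 := Iio_mem_nhds hρs1
    have e := ((e1.and e2).filter_mono
      (nhdsWithin_le_nhds (s := Set.Ioi ρs))).and self_mem_nhdsWithin
    obtain ⟨ρ, ⟨r1, r2⟩, r3⟩ := e.exists
    have r3 : ρs < ρ := r3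
    have r0 : 0 < ρ := by linarith
    rw [max_eq_left (div_nonneg (mul_nonneg (by linarith) Sp.le) (hden ρ r2.le).le)] at r1
    refine key ρ _ _ r0.le r2.le hPu1s hPu2s hi hii (lt_of_le_of_lt hiii ?_) r1
    apply hψ
    · exact Set.mem_Ici.2 (by positivity)
    · exact Set.mem_Ici.2 (by positivity)
    · exact mul_lt_mul_of_pos_right r3 (by linarith)
end
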